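/- Main semantic lemma: let Γ be a prime theory, viewed as a world of the canonical model M₀. Then, in M₀, Γ ⊩ P holds if and only if P ∈ Γ, for every moded proposition P. -/

import Mathlib

/-!
For strong `P` the forcing clauses match the introduction and elimination rules of PRK together
with primeness, so everything rests on the classical case: `A⊕` belongs to a prime theory `Γ`
iff `A⁻` belongs to no prime theory extending `Γ`, and dually.

* If `A⊕ ∈ Γ` then no prime extension contains `A⁻`, because `A⁻` yields `A⊖`, then `A⊕` and `A⊖`
  yield `A⁺`, and `A⁺`, `A⁻` are contradictory (`cp_sn_absurd`).
* If `A⊕ ∉ Γ` then `Γ ∪ {A⊖}` is consistent by the rule (IC⁺), and by Zorn's lemma it lies in a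
  maximal consistent set `Δ`, which is a prime theory (`MaxCon.prime`). A maximal consistent set
  contains `B⊕` or `B⊖` for every `B` (`MaxCon.cp_or_cn`), and from this `A⊖ ∈ Δ` implies
  `A⁻ ∈ Δ` by a case analysis on the head connective of `A` (`MaxCon.sn_of_cn`). When `A` is a
  variable, Stabilization of the canonical model at `Δ` decides it: by maximality, `Δ` is its own
  only extension.
-/

/-- Pure propositions: A ::= α | A∧B | A∨B | ¬A -/
inductive PureProp : Type
  | var : ℕ → PureProp
  | conj : PureProp → PureProp → PureProp
  | disj : PureProp → PureProp → PureProp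
  | neg : PureProp → PureProp
  deriving DecidableEq

/-- Moded propositions: A⁺ (sp), A⁻ (sn), A⊕ (cp), A⊖ (cn). -/
inductive MProp : Type
  | sp : PureProp → MProp
  | sn : PureProp → MProp
  | cp : PureProp → MProp
  | cn : PureProp → MProp
  deriving DecidableEq

/-- The opposite P~: flips the sign, keeps the strength. -/
def MProp.opp : MProp → MProp
  | .sp A => .sn A
  | .sn A => .sp A
  | .cp A => .cn A
  | .cn A => .cp A

def MProp.isStrong : MProp → Prop
  | .sp _ => True
  | .sn _ => True
  | .cp _ => False
  | .cn _ => False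

def MProp.isClassical : MProp → Prop
  | .sp _ => False
  | .sn _ => False
  | .cp _ => True
  | .cn _ => True

/-- Derivability in system PRK (natural deduction), Γ a finite set of moded propositions. -/
inductive PRK : Finset MProp → MProp → Prop
  | ax {Γ : Finset MProp} {P : MProp} : P ∈ Γ → PRK Γ P
  | abs {Γ : Finset MProp} {P Q : MProp} :
      P.isStrong → PRK Γ P → PRK Γ P.opp → PRK Γ Q
  | iConjP {Γ A B} : PRK Γ (MProp.cp A) → PRK Γ (MProp.cp B) → PRK Γ (MProp.sp (PureProp.conj A B))
  | eConjP1 {Γ A B} : PRK Γ (MProp.sp (PureProp.conj A B)) → PRK Γ (MProp.cp A)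
  | eConjP2 {Γ A B} : PRK Γ (MProp.sp (PureProp.conj A B)) → PRK Γ (MProp.cp B)
  | iDisjP1 {Γ A B} : PRK Γ (MProp.cp A) → PRK Γ (MProp.sp (PureProp.disj A B))
  | iDisjP2 {Γ A B} : PRK Γ (MProp.cp B) → PRK Γ (MProp.sp (PureProp.disj A B))
  | eDisjP {Γ A B P} : PRK Γ (MProp.sp (PureProp.disj A B)) →
      PRK (insert (MProp.cp A) Γ) P → PRK (insert (MProp.cp B) Γ) P → PRK Γ P
  | iNegP {Γ A} : PRK Γ (MProp.cn A) → PRK Γ (MProp.sp (PureProp.neg A))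
  | eNegP {Γ A} : PRK Γ (MProp.sp (PureProp.neg A)) → PRK Γ (MProp.cn A)
  | icP {Γ A} : PRK (insert (MProp.cn A) Γ) (MProp.sp A) → PRK Γ (MProp.cp A)
  | ecP {Γ A} : PRK Γ (MProp.cp A) → PRK Γ (MProp.cn A) → PRK Γ (MProp.sp A)
  | iDisjN {Γ A B} : PRK Γ (MProp.cn A) → PRK Γ (MProp.cn B) → PRK Γ (MProp.sn (PureProp.disj A B))
  | eDisjN1 {Γ A B} : PRK Γ (MProp.sn (PureProp.disj A B)) → PRK Γ (MProp.cn A)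
  | eDisjN2 {Γ A B} : PRK Γ (MProp.sn (PureProp.disj A B)) → PRK Γ (MProp.cn B)
  | iConjN1 {Γ A B} : PRK Γ (MProp.cn A) → PRK Γ (MProp.sn (PureProp.conj A B))
  | iConjN2 {Γ A B} : PRK Γ (MProp.cn B) → PRK Γ (MProp.sn (PureProp.conj A B))
  | eConjN {Γ A B P} : PRK Γ (MProp.sn (PureProp.conj A B)) →
      PRK (insert (MProp.cn A) Γ) P → PRK (insert (MProp.cn B) Γ) P → PRK Γ P
  | iNegN {Γ A} : PRK Γ (MProp.cp A) → PRK Γ (MProp.sn (PureProp.neg A))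
  | eNegN {Γ A} : PRK Γ (MProp.sn (PureProp.neg A)) → PRK Γ (MProp.cp A)
  | icN {Γ A} : PRK (insert (MProp.cp A) Γ) (MProp.sn A) → PRK Γ (MProp.cn A)
  | ecN {Γ A} : PRK Γ (MProp.cn A) → PRK Γ (MProp.cp A) → PRK Γ (MProp.sn A)

/-- A Kripke model for PRK. -/
structure KripkeModel (W : Type) where
  le : W → W → Prop
  le_refl : ∀ w, le w w
  le_trans : ∀ {a b c}, le a b → le b c → le a c
  le_antisymm : ∀ {a b}, le a b → le b a → a = b
  Vp : W → ℕ → Prop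
  Vn : W → ℕ → Prop
  monoP : ∀ {w w'}, le w w' → ∀ {a}, Vp w a → Vp w' a
  monoN : ∀ {w w'}, le w w' → ∀ {a}, Vn w a → Vn w' a
  stab : ∀ w a, ∃ w', le w w' ∧ Xor' (Vp w' a) (Vn w' a)

def PureProp.size : PureProp → ℕ
  | .var _ => 1
  | .conj A B => 1 + A.size + B.size
  | .disj A B => 1 + A.size + B.size
  | .neg A => 1 + A.size

def MProp.meas : MProp → ℕ
  | .sp A => 2 * A.size
  | .sn A => 2 * A.size
  | .cp A => 2 * A.size + 1
  | .cn A => 2 * A.size + 1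

/-- The forcing relation w ⊩ P, defined by recursion on the measure. -/
def Forces {W : Type} (M : KripkeModel W) : W → MProp → Prop
  | w, .sp (.var a) => M.Vp w a
  | w, .sn (.var a) => M.Vn w a
  | w, .sp (.conj A B) => Forces M w (.cp A) ∧ Forces M w (.cp B)
  | w, .sn (.conj A B) => Forces M w (.cn A) ∨ Forces M w (.cn B)
  | w, .sp (.disj A B) => Forces M w (.cp A) ∨ Forces M w (.cp B)
  | w, .sn (.disj A B) => Forces M w (.cn A) ∧ Forces M w (.cn B)
  | w, .sp (.neg A) => Forces M w (.cn A)
  | w, .sn (.neg A) => Forces M w (.cp A)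
  | w, .cp A => ∀ w', M.le w w' → ¬ Forces M w' (.sn A)
  | w, .cn A => ∀ w', M.le w w' → ¬ Forces M w' (.sp A)
termination_by w P => P.meas
decreasing_by all_goals simp [MProp.meas, PureProp.size] <;> omega

/-- Derivability from a possibly infinite set of moded propositions. -/
def SDeriv (Γ : Set MProp) (P : MProp) : Prop :=
  ∃ Δ : Finset MProp, ↑Δ ⊆ Γ ∧ PRK Δ P

/-- Consistency of a possibly infinite set of moded propositions. -/
def SetConsistent (Γ : Set MProp) : Prop := ∃ P, ¬ SDeriv Γ P

/-- A prime theory: closed by deduction, consistent, and disjunctive. -/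
def PrimeTheory (Γ : Set MProp) : Prop :=
  (∀ P, SDeriv Γ P → P ∈ Γ) ∧
  SetConsistent Γ ∧
  (∀ A B, MProp.sp (PureProp.disj A B) ∈ Γ → MProp.cp A ∈ Γ ∨ MProp.cp B ∈ Γ) ∧
  (∀ A B, MProp.sn (PureProp.conj A B) ∈ Γ → MProp.cn A ∈ Γ ∨ MProp.cn B ∈ Γ)

/-! ### Structural properties of derivability -/

theorem PRK.weaken {Γ : Finset MProp} {P : MProp} (h : PRK Γ P) :
    ∀ {Δ : Finset MProp}, Γ ⊆ Δ → PRK Δ P := by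
  induction h with
  | ax h => exact fun hs => .ax (hs h)
  | abs hP _ _ h1 h2 => exact fun hs => .abs hP (h1 hs) (h2 hs)
  | iConjP _ _ h1 h2 => exact fun hs => .iConjP (h1 hs) (h2 hs)
  | eConjP1 _ h => exact fun hs => .eConjP1 (h hs)
  | eConjP2 _ h => exact fun hs => .eConjP2 (h hs)
  | iDisjP1 _ h => exact fun hs => .iDisjP1 (h hs)
  | iDisjP2 _ h => exact fun hs => .iDisjP2 (h hs)
  | eDisjP _ _ _ h h1 h2 =>
    exact fun hs => .eDisjP (h hs) (h1 (Finset.insert_subset_insert _ hs))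
      (h2 (Finset.insert_subset_insert _ hs))
  | iNegP _ h => exact fun hs => .iNegP (h hs)
  | eNegP _ h => exact fun hs => .eNegP (h hs)
  | icP _ h => exact fun hs => .icP (h (Finset.insert_subset_insert _ hs))
  | ecP _ _ h1 h2 => exact fun hs => .ecP (h1 hs) (h2 hs)
  | iDisjN _ _ h1 h2 => exact fun hs => .iDisjN (h1 hs) (h2 hs)
  | eDisjN1 _ h => exact fun hs => .eDisjN1 (h hs)
  | eDisjN2 _ h => exact fun hs => .eDisjN2 (h hs)
  | iConjN1 _ h => exact fun hs => .iConjN1 (h hs)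
  | iConjN2 _ h => exact fun hs => .iConjN2 (h hs)
  | eConjN _ _ _ h h1 h2 =>
    exact fun hs => .eConjN (h hs) (h1 (Finset.insert_subset_insert _ hs))
      (h2 (Finset.insert_subset_insert _ hs))
  | iNegN _ h => exact fun hs => .iNegN (h hs)
  | eNegN _ h => exact fun hs => .eNegN (h hs)
  | icN _ h => exact fun hs => .icN (h (Finset.insert_subset_insert _ hs))
  | ecN _ _ h1 h2 => exact fun hs => .ecN (h1 hs) (h2 hs)

/-- Substitutions of derivations for hypotheses extend under a bound hypothesis. -/
theorem PRK.lift {Γ Δ : Finset MProp} (R : MProp) (hs : ∀ Q ∈ Γ, PRK Δ Q) :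
    ∀ Q ∈ insert R Γ, PRK (insert R Δ) Q := by
  intro Q hQ
  rcases Finset.mem_insert.1 hQ with rfl | hQ
  · exact .ax (Finset.mem_insert_self _ _)
  · exact (hs Q hQ).weaken (Finset.subset_insert _ _)

/-- Simultaneous cut. -/
theorem PRK.subst {Γ : Finset MProp} {P : MProp} (h : PRK Γ P) :
    ∀ {Δ : Finset MProp}, (∀ Q ∈ Γ, PRK Δ Q) → PRK Δ P := by
  induction h with
  | ax h => exact fun hs => hs _ h
  | abs hP _ _ h1 h2 => exact fun hs => .abs hP (h1 hs) (h2 hs)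
  | iConjP _ _ h1 h2 => exact fun hs => .iConjP (h1 hs) (h2 hs)
  | eConjP1 _ h => exact fun hs => .eConjP1 (h hs)
  | eConjP2 _ h => exact fun hs => .eConjP2 (h hs)
  | iDisjP1 _ h => exact fun hs => .iDisjP1 (h hs)
  | iDisjP2 _ h => exact fun hs => .iDisjP2 (h hs)
  | eDisjP _ _ _ h h1 h2 =>
    exact fun hs => .eDisjP (h hs) (h1 (PRK.lift _ hs)) (h2 (PRK.lift _ hs))
  | iNegP _ h => exact fun hs => .iNegP (h hs)
  | eNegP _ h => exact fun hs => .eNegP (h hs)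
  | icP _ h => exact fun hs => .icP (h (PRK.lift _ hs))
  | ecP _ _ h1 h2 => exact fun hs => .ecP (h1 hs) (h2 hs)
  | iDisjN _ _ h1 h2 => exact fun hs => .iDisjN (h1 hs) (h2 hs)
  | eDisjN1 _ h => exact fun hs => .eDisjN1 (h hs)
  | eDisjN2 _ h => exact fun hs => .eDisjN2 (h hs)
  | iConjN1 _ h => exact fun hs => .iConjN1 (h hs)
  | iConjN2 _ h => exact fun hs => .iConjN2 (h hs)
  | eConjN _ _ _ h h1 h2 =>
    exact fun hs => .eConjN (h hs) (h1 (PRK.lift _ hs)) (h2 (PRK.lift _ hs))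
  | iNegN _ h => exact fun hs => .iNegN (h hs)
  | eNegN _ h => exact fun hs => .eNegN (h hs)
  | icN _ h => exact fun hs => .icN (h (PRK.lift _ hs))
  | ecN _ _ h1 h2 => exact fun hs => .ecN (h1 hs) (h2 hs)

theorem SDeriv.of_mem {S : Set MProp} {P : MProp} (h : P ∈ S) : SDeriv S P :=
  ⟨{P}, by simpa using h, .ax (by simp)⟩

theorem SDeriv.mono {S T : Set MProp} {P : MProp} (h : SDeriv S P) (hST : S ⊆ T) :
    SDeriv T P := by
  obtain ⟨Δ, hΔ, d⟩ := h
  exact ⟨Δ, hΔ.trans hST, d⟩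

/-- Any two derivations from `S` can be carried out over a common finite context, so a
two-premise rule of PRK without bound hypotheses lifts to `SDeriv`. -/
theorem SDeriv.map₂ {S : Set MProp} {P Q R : MProp}
    (f : ∀ Δ : Finset MProp, PRK Δ P → PRK Δ Q → PRK Δ R)
    (hP : SDeriv S P) (hQ : SDeriv S Q) : SDeriv S R := by
  obtain ⟨Δ, hΔ, d⟩ := hP
  obtain ⟨Δ', hΔ', d'⟩ := hQ
  refine ⟨Δ ∪ Δ', ?_, f _ (d.weaken Finset.subset_union_left)
    (d'.weaken Finset.subset_union_right)⟩
  rw [Finset.coe_union]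
  exact Set.union_subset hΔ hΔ'

theorem SDeriv.insert_iff {S : Set MProp} {P Q : MProp} :
    SDeriv (insert P S) Q ↔ ∃ Δ : Finset MProp, ↑Δ ⊆ S ∧ PRK (insert P Δ) Q := by
  constructor
  · rintro ⟨Δ, hΔ, d⟩
    refine ⟨Δ.erase P, fun R hR => ?_, d.weaken (Finset.insert_erase_subset P Δ)⟩
    have hR' := Finset.mem_erase.1 (Finset.mem_coe.1 hR)
    exact (hΔ hR'.2).resolve_left hR'.1
  · rintro ⟨Δ, hΔ, d⟩
    exact ⟨insert P Δ, by rw [Finset.coe_insert]; exact Set.insert_subset_insert hΔ, d⟩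

theorem SDeriv.cut {S : Set MProp} {P Q : MProp} (hP : SDeriv S P)
    (hQ : SDeriv (insert P S) Q) : SDeriv S Q := by
  obtain ⟨Δ, hΔ, d⟩ := hP
  obtain ⟨Δ', hΔ', d'⟩ := SDeriv.insert_iff.1 hQ
  refine ⟨Δ ∪ Δ', ?_, d'.subst fun R hR => ?_⟩
  · rw [Finset.coe_union]
    exact Set.union_subset hΔ hΔ'
  · rcases Finset.mem_insert.1 hR with rfl | hR
    · exact d.weaken Finset.subset_union_left
    · exact .ax (Finset.mem_union_right _ hR)

theorem SDeriv.icP {S : Set MProp} {A : PureProp}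
    (h : SDeriv (insert (.cn A) S) (.sp A)) : SDeriv S (.cp A) := by
  obtain ⟨Δ, hΔ, d⟩ := SDeriv.insert_iff.1 h
  exact ⟨Δ, hΔ, .icP d⟩

theorem SDeriv.icN {S : Set MProp} {A : PureProp}
    (h : SDeriv (insert (.cp A) S) (.sn A)) : SDeriv S (.cn A) := by
  obtain ⟨Δ, hΔ, d⟩ := SDeriv.insert_iff.1 h
  exact ⟨Δ, hΔ, .icN d⟩

/-- A bound-hypothesis case distinction, for use with (E∨⁺) and (E∧⁻). -/
theorem SDeriv.cases {S : Set MProp} {P Q D R : MProp}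
    (f : ∀ Δ : Finset MProp, PRK Δ D → PRK (insert P Δ) R → PRK (insert Q Δ) R → PRK Δ R)
    (hD : SDeriv S D) (hP : SDeriv (insert P S) R) (hQ : SDeriv (insert Q S) R) :
    SDeriv S R := by
  obtain ⟨Δ, hΔ, d⟩ := hD
  obtain ⟨Δ₁, hΔ₁, d₁⟩ := SDeriv.insert_iff.1 hP
  obtain ⟨Δ₂, hΔ₂, d₂⟩ := SDeriv.insert_iff.1 hQ
  refine ⟨Δ ∪ (Δ₁ ∪ Δ₂), ?_, f _ (d.weaken Finset.subset_union_left)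
    (d₁.weaken (Finset.insert_subset_insert _ ?_))
    (d₂.weaken (Finset.insert_subset_insert _ ?_))⟩
  · rw [Finset.coe_union, Finset.coe_union]
    exact Set.union_subset hΔ (Set.union_subset hΔ₁ hΔ₂)
  · exact Finset.subset_union_left.trans Finset.subset_union_right
  · exact Finset.subset_union_right.trans Finset.subset_union_right

/-! ### Prime theories -/

section Prime

variable {S : Set MProp}

theorem PrimeTheory.map {P Q : MProp} (hS : PrimeTheory S)
    (f : ∀ Δ : Finset MProp, PRK Δ P → PRK Δ Q) (hP : P ∈ S) : Q ∈ S :=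
  hS.1 _ (.map₂ (fun Δ d _ => f Δ d) (.of_mem hP) (.of_mem hP))

theorem PrimeTheory.map₂ {P Q R : MProp} (hS : PrimeTheory S)
    (f : ∀ Δ : Finset MProp, PRK Δ P → PRK Δ Q → PRK Δ R) (hP : P ∈ S) (hQ : Q ∈ S) : R ∈ S :=
  hS.1 _ (.map₂ f (.of_mem hP) (.of_mem hQ))

theorem PrimeTheory.sp_sn_absurd {A : PureProp} (hS : PrimeTheory S)
    (h : MProp.sp A ∈ S) (h' : MProp.sn A ∈ S) : False := by
  obtain ⟨Q, hQ⟩ := hS.2.1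
  exact hQ (.map₂ (fun _ d d' => .abs (P := .sp A) trivial d d') (.of_mem h) (.of_mem h'))

theorem PrimeTheory.cp_sn_absurd {A : PureProp} (hS : PrimeTheory S)
    (h : MProp.cp A ∈ S) (h' : MProp.sn A ∈ S) : False := by
  have hcn : MProp.cn A ∈ S :=
    hS.map (fun _ d => .icN (d.weaken (Finset.subset_insert _ _))) h'
  exact hS.sp_sn_absurd (hS.map₂ (fun _ => .ecP) h hcn) h'

theorem PrimeTheory.cn_sp_absurd {A : PureProp} (hS : PrimeTheory S)
    (h : MProp.cn A ∈ S) (h' : MProp.sp A ∈ S) : False := by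
  have hcp : MProp.cp A ∈ S :=
    hS.map (fun _ d => .icP (d.weaken (Finset.subset_insert _ _))) h'
  exact hS.sp_sn_absurd h' (hS.map₂ (fun _ => .ecN) h hcp)

end Prime

/-! ### Maximal consistent sets -/

/-- Maximal consistent sets of moded propositions. -/
def MaxCon (S : Set MProp) : Prop := Maximal SetConsistent S

theorem not_setConsistent {S : Set MProp} : ¬ SetConsistent S ↔ ∀ P, SDeriv S P := by
  simp [SetConsistent]

/-- Lindenbaum's lemma. -/
theorem exists_maxCon {S : Set MProp} (hS : SetConsistent S) : ∃ T, S ⊆ T ∧ MaxCon T := by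
  refine zorn_subset_nonempty {T | SetConsistent T} (fun c hc hchain hne => ?_) S hS
  refine ⟨⋃₀ c, ?_, fun T hT => Set.subset_sUnion_of_mem hT⟩
  by_contra hcon
  have hall := not_setConsistent.1 hcon
  -- Inconsistency is witnessed by a single finite set refuting one variable.
  obtain ⟨Δ, hΔ, d, d'⟩ : ∃ Δ : Finset MProp, ↑Δ ⊆ ⋃₀ c ∧
      PRK Δ (.sp (.var 0)) ∧ PRK Δ (.sn (.var 0)) := by
    obtain ⟨Δ, hΔ, d⟩ := hall (.sp (.var 0))
    obtain ⟨Δ', hΔ', d'⟩ := hall (.sn (.var 0))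
    refine ⟨Δ ∪ Δ', ?_, d.weaken Finset.subset_union_left,
      d'.weaken Finset.subset_union_right⟩
    rw [Finset.coe_union]
    exact Set.union_subset hΔ hΔ'
  obtain ⟨T, hT, hΔT⟩ := DirectedOn.exists_mem_subset_of_finset_subset_biUnion
    (f := id) hne hchain.directedOn (s := Δ) (by simpa [Set.sUnion_eq_biUnion] using hΔ)
  obtain ⟨Q, hQ⟩ := hc hT
  exact hQ ⟨Δ, hΔT, .abs (P := .sp (.var 0)) trivial d d'⟩

section MaxCon

variable {S : Set MProp}

theorem MaxCon.sderiv_insert {P : MProp} (hS : MaxCon S) (hP : P ∉ S) (Q : MProp) :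
    SDeriv (insert P S) Q := by
  refine not_setConsistent.1 (fun hcon => hP ?_) Q
  exact hS.2 hcon (Set.subset_insert P S) (Set.mem_insert P S)

theorem MaxCon.prime (hS : MaxCon S) : PrimeTheory S := by
  have ⟨R, hR⟩ : SetConsistent S := hS.1
  refine ⟨fun P hP => ?_, hS.1, fun A B h => ?_, fun A B h => ?_⟩
  · by_contra hn
    exact hR (hP.cut (hS.sderiv_insert hn R))
  · by_contra! hn
    exact hR (.cases (fun _ => .eDisjP) (.of_mem h) (hS.sderiv_insert hn.1 R)
      (hS.sderiv_insert hn.2 R))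
  · by_contra! hn
    exact hR (.cases (fun _ => .eConjN) (.of_mem h) (hS.sderiv_insert hn.1 R)
      (hS.sderiv_insert hn.2 R))

theorem MaxCon.cp_or_cn (hS : MaxCon S) (A : PureProp) : MProp.cp A ∈ S ∨ MProp.cn A ∈ S := by
  by_contra! hn
  exact hn.1 (hS.prime.1 _ (.icP (hS.sderiv_insert hn.2 _)))

/-- For variables the hypothesis `hvar` is needed; it is what Stabilization provides. -/
theorem MaxCon.sn_of_cn (hS : MaxCon S)
    (hvar : ∀ a, MProp.sp (.var a) ∈ S ∨ MProp.sn (.var a) ∈ S) :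
    ∀ {A : PureProp}, MProp.cn A ∈ S → MProp.sn A ∈ S
  | .var a, h => (hvar a).resolve_left (hS.prime.cn_sp_absurd h)
  | .conj A B, h => by
    rcases hS.cp_or_cn A with hA | hA
    · rcases hS.cp_or_cn B with hB | hB
      · exact (hS.prime.cn_sp_absurd h (hS.prime.map₂ (fun _ => .iConjP) hA hB)).elim
      · exact hS.prime.map (fun _ => .iConjN2) hB
    · exact hS.prime.map (fun _ => .iConjN1) hA
  | .disj A B, h => by
    have hA := (hS.cp_or_cn A).resolve_left fun hA =>
      hS.prime.cn_sp_absurd h (hS.prime.map (fun _ => .iDisjP1) hA)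
    have hB := (hS.cp_or_cn B).resolve_left fun hB =>
      hS.prime.cn_sp_absurd h (hS.prime.map (fun _ => .iDisjP2) hB)
    exact hS.prime.map₂ (fun _ => .iDisjN) hA hB
  | .neg A, h => by
    have hA := (hS.cp_or_cn A).resolve_right fun hA =>
      hS.prime.cn_sp_absurd h (hS.prime.map (fun _ => .iNegP) hA)
    exact hS.prime.map (fun _ => .iNegN) hA

/-- The dual of `MaxCon.sn_of_cn`. -/
theorem MaxCon.sp_of_cp (hS : MaxCon S)
    (hvar : ∀ a, MProp.sp (.var a) ∈ S ∨ MProp.sn (.var a) ∈ S) :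
    ∀ {A : PureProp}, MProp.cp A ∈ S → MProp.sp A ∈ S
  | .var a, h => (hvar a).resolve_right (hS.prime.cp_sn_absurd h)
  | .disj A B, h => by
    rcases hS.cp_or_cn A with hA | hA
    · exact hS.prime.map (fun _ => .iDisjP1) hA
    · rcases hS.cp_or_cn B with hB | hB
      · exact hS.prime.map (fun _ => .iDisjP2) hB
      · exact (hS.prime.cp_sn_absurd h (hS.prime.map₂ (fun _ => .iDisjN) hA hB)).elim
  | .conj A B, h => by
    have hA := (hS.cp_or_cn A).resolve_right fun hA =>
      hS.prime.cp_sn_absurd h (hS.prime.map (fun _ => .iConjN1) hA)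
    have hB := (hS.cp_or_cn B).resolve_right fun hB =>
      hS.prime.cp_sn_absurd h (hS.prime.map (fun _ => .iConjN2) hB)
    exact hS.prime.map₂ (fun _ => .iConjP) hA hB
  | .neg A, h => by
    have hA := (hS.cp_or_cn A).resolve_left fun hA =>
      hS.prime.cp_sn_absurd h (hS.prime.map (fun _ => .iNegN) hA)
    exact hS.prime.map (fun _ => .iNegP) hA

end MaxCon

/-- A prime theory not containing `A⊕` extends to a maximal consistent set containing `A⊖`. -/
theorem PrimeTheory.exists_maxCon_cn {S : Set MProp} (hS : PrimeTheory S) {A : PureProp}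
    (h : MProp.cp A ∉ S) : ∃ T, S ⊆ T ∧ MaxCon T ∧ MProp.cn A ∈ T := by
  have hcon : SetConsistent (insert (.cn A) S) := ⟨.sp A, fun hd => h (hS.1 _ hd.icP)⟩
  obtain ⟨T, hT, hmax⟩ := exists_maxCon hcon
  exact ⟨T, (Set.subset_insert _ _).trans hT, hmax, hT (Set.mem_insert _ _)⟩

/-- The dual of `PrimeTheory.exists_maxCon_cn`. -/
theorem PrimeTheory.exists_maxCon_cp {S : Set MProp} (hS : PrimeTheory S) {A : PureProp}
    (h : MProp.cn A ∉ S) : ∃ T, S ⊆ T ∧ MaxCon T ∧ MProp.cp A ∈ T := by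
  have hcon : SetConsistent (insert (.cp A) S) := ⟨.sn A, fun hd => h (hS.1 _ hd.icN)⟩
  obtain ⟨T, hT, hmax⟩ := exists_maxCon hcon
  exact ⟨T, (Set.subset_insert _ _).trans hT, hmax, hT (Set.mem_insert _ _)⟩

/-! ### Forcing in the canonical model -/

/-- Main semantic lemma: in the canonical model (worlds = prime theories ordered by
    inclusion, with V⁺(Γ) = {α : α⁺ ∈ Γ} and V⁻(Γ) = {α : α⁻ ∈ Γ}), forcing
    coincides with membership. -/
theorem main_semantic_lemma
    (M : KripkeModel {Γ : Set MProp // PrimeTheory Γ})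
    (hle : ∀ Γ Δ : {Γ : Set MProp // PrimeTheory Γ}, M.le Γ Δ ↔ Γ.1 ⊆ Δ.1)
    (hVp : ∀ (Γ : {Γ : Set MProp // PrimeTheory Γ}) (a : ℕ),
      M.Vp Γ a ↔ MProp.sp (PureProp.var a) ∈ Γ.1)
    (hVn : ∀ (Γ : {Γ : Set MProp // PrimeTheory Γ}) (a : ℕ),
      M.Vn Γ a ↔ MProp.sn (PureProp.var a) ∈ Γ.1)
    (Γ : {Γ : Set MProp // PrimeTheory Γ}) (P : MProp) :
    Forces M Γ P ↔ P ∈ Γ.1 := by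
  -- By maximality the stabilizing extension of a maximal consistent set is that set itself.
  have hvar : ∀ {T : Set MProp}, MaxCon T →
      ∀ a, MProp.sp (.var a) ∈ T ∨ MProp.sn (.var a) ∈ T := by
    intro T hT a
    obtain ⟨T', hTT', hx⟩ := M.stab ⟨T, hT.prime⟩ a
    have hsub : T'.1 ⊆ T := hT.2 T'.2.2.1 ((hle _ _).1 hTT')
    rcases hx with hx | hx
    · exact .inl (hsub ((hVp _ _).1 hx.1))
    · exact .inr (hsub ((hVn _ _).1 hx.1))
  have main : ∀ (n : ℕ) (P : MProp), P.meas = n →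
      ∀ Γ : {Γ : Set MProp // PrimeTheory Γ}, Forces M Γ P ↔ P ∈ Γ.1 := by
    intro n
    induction n using Nat.strong_induction_on with
    | _ n ih =>
    intro P hn Γ
    have IH : ∀ Q : MProp, Q.meas < P.meas →
        ∀ Δ : {Γ : Set MProp // PrimeTheory Γ}, Forces M Δ Q ↔ Q ∈ Δ.1 :=
      fun Q hQ => ih _ (hn ▸ hQ) Q rfl
    have hΓ := Γ.2
    match P, IH with
    | .sp (.var a), _ => rw [Forces, hVp]
    | .sn (.var a), _ => rw [Forces, hVn]
    | .sp (.conj A B), IH =>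
      rw [Forces, IH (.cp A) (by simp only [MProp.meas, PureProp.size]; omega),
        IH (.cp B) (by simp only [MProp.meas, PureProp.size]; omega)]
      exact ⟨fun h => hΓ.map₂ (fun _ => .iConjP) h.1 h.2,
        fun h => ⟨hΓ.map (fun _ => .eConjP1) h, hΓ.map (fun _ => .eConjP2) h⟩⟩
    | .sn (.conj A B), IH =>
      rw [Forces, IH (.cn A) (by simp only [MProp.meas, PureProp.size]; omega),
        IH (.cn B) (by simp only [MProp.meas, PureProp.size]; omega)]
      exact ⟨fun h => h.elim (hΓ.map fun _ => .iConjN1) (hΓ.map fun _ => .iConjN2),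
        hΓ.2.2.2 A B⟩
    | .sp (.disj A B), IH =>
      rw [Forces, IH (.cp A) (by simp only [MProp.meas, PureProp.size]; omega),
        IH (.cp B) (by simp only [MProp.meas, PureProp.size]; omega)]
      exact ⟨fun h => h.elim (hΓ.map fun _ => .iDisjP1) (hΓ.map fun _ => .iDisjP2),
        hΓ.2.2.1 A B⟩
    | .sn (.disj A B), IH =>
      rw [Forces, IH (.cn A) (by simp only [MProp.meas, PureProp.size]; omega),
        IH (.cn B) (by simp only [MProp.meas, PureProp.size]; omega)]
      exact ⟨fun h => hΓ.map₂ (fun _ => .iDisjN) h.1 h.2,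
        fun h => ⟨hΓ.map (fun _ => .eDisjN1) h, hΓ.map (fun _ => .eDisjN2) h⟩⟩
    | .sp (.neg A), IH =>
      rw [Forces, IH (.cn A) (by simp only [MProp.meas, PureProp.size]; omega)]
      exact ⟨hΓ.map fun _ => .iNegP, hΓ.map fun _ => .eNegP⟩
    | .sn (.neg A), IH =>
      rw [Forces, IH (.cp A) (by simp only [MProp.meas, PureProp.size]; omega)]
      exact ⟨hΓ.map fun _ => .iNegN, hΓ.map fun _ => .eNegN⟩
    | .cp A, IH =>
      have IHA := IH (.sn A) (by simp only [MProp.meas]; omega)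
      rw [Forces]
      refine ⟨fun h => ?_, fun h Δ hΔ hf => ?_⟩
      · by_contra hn
        obtain ⟨T, hΓT, hT, hcn⟩ := hΓ.exists_maxCon_cn hn
        exact h ⟨T, hT.prime⟩ ((hle _ _).2 hΓT) ((IHA _).2 (hT.sn_of_cn (hvar hT) hcn))
      · exact Δ.2.cp_sn_absurd ((hle _ _).1 hΔ h) ((IHA Δ).1 hf)
    | .cn A, IH =>
      have IHA := IH (.sp A) (by simp only [MProp.meas]; omega)
      rw [Forces]
      refine ⟨fun h => ?_, fun h Δ hΔ hf => ?_⟩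
      · by_contra hn
        obtain ⟨T, hΓT, hT, hcp⟩ := hΓ.exists_maxCon_cp hn
        exact h ⟨T, hT.prime⟩ ((hle _ _).2 hΓT) ((IHA _).2 (hT.sp_of_cp (hvar hT) hcp))
      · exact Δ.2.cn_sp_absurd ((hle _ _).1 hΔ h) ((IHA Δ).1 hf)
  exact main _ P rfl Γ
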